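/- arXiv:math/0703517 — 3 statements merged into one kernel-verified Lean document; each statement's English description precedes it below -/
import Mathlib

section
/- There exists a constant C > 0 such that for all integers N ≥ 1, all t ∈ [0,1], and all α with 0 < α ≤ N^{−3/4}: |q_t^N(α) − 1| ≤ C·N^{−1/3}. -/
open Set Filter

noncomputable def GP : ℝ → ℝ := fun x => x * Real.log x + (1 - x) * Real.log (1 - x)

noncomputable def Gt (f0 f1 : ℝ → ℝ) (t : ℝ) : ℝ → ℝ :=
  fun x => GP x + ((1 - t) * f0 x + t * f1 x)

noncomputable def Phase (G : ℝ → ℝ) (α : ℝ) : ℝ → ℝ :=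
  fun x => (x - α) * deriv G x - (G x - G α)

noncomputable def Qnorm (G : ℝ → ℝ) (N : ℕ) (α : ℝ) : ℝ :=
  2 * Real.pi * ∫ x in (0:ℝ)..1, Real.exp (-(N : ℝ) * Phase G α x)

noncomputable def RPhase (G : ℝ → ℝ) (α : ℝ) : ℝ → ℝ :=
  fun y => (1 / α) * Phase G α (α * (1 + y))

noncomputable def Leg (G : ℝ → ℝ) (S : Set ℝ) : ℝ → ℝ :=
  fun ρ => sSup ((fun x => x * ρ - G x) '' S)

noncomputable def QQ (G : ℝ → ℝ) (N : ℕ) (α : ℝ) : ℝ :=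
  Qnorm G N α * Real.exp ((N : ℝ) * G α)

namespace BergAux

/-- explicit phase of `GP` on `(0,1)` -/
noncomputable def FP (α x : ℝ) : ℝ := -(α * Real.log x) - (1 - α) * Real.log (1 - x) + GP α

/-- phase of a smooth function -/
noncomputable def Pf (g : ℝ → ℝ) (α x : ℝ) : ℝ := (x - α) * deriv g x - (g x - g α)

/-- weight -/
noncomputable def W (K α x : ℝ) : ℝ :=
  Real.exp (-K * GP α) * (x ^ (K * α) * (1 - x) ^ (K * (1 - α)))

lemma hasDerivAt_GP {x : ℝ} (h0 : 0 < x) (h1 : x < 1) :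
    HasDerivAt GP (Real.log x - Real.log (1 - x)) x := by
  have hs : HasDerivAt (fun y : ℝ => 1 - y) (-1) x := by
    simpa using (hasDerivAt_id x).const_sub 1
  have h1x : (1 - x) ≠ 0 := by linarith
  have e1 := (hasDerivAt_id x).mul (Real.hasDerivAt_log h0.ne')
  have e2 := hs.mul (hs.log h1x)
  have := e1.add e2
  refine this.congr_deriv ?_
  simp only [id]
  field_simp
  ring

lemma hasDerivAt_GP' {x : ℝ} (h0 : 0 < x) (h1 : x < 1) :
    HasDerivAt (fun x => Real.log x - Real.log (1 - x)) (1 / (x * (1 - x))) x := by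
  have hs : HasDerivAt (fun y : ℝ => 1 - y) (-1) x := by
    simpa using (hasDerivAt_id x).const_sub 1
  have h1x : (1 - x) ≠ 0 := by linarith
  have := (Real.hasDerivAt_log h0.ne').sub (hs.log h1x)
  refine this.congr_deriv ?_
  field_simp
  ring

lemma continuous_GP : Continuous GP := by
  have h := Real.continuous_mul_log
  exact h.add (h.comp (continuous_const.sub continuous_id))

lemma smooth_deriv {g : ℝ → ℝ} (hg : ContDiff ℝ (⊤ : ℕ∞) g) : ContDiff ℝ (⊤ : ℕ∞) (deriv g) := by
  have h : ContDiff ℝ (((⊤ : ℕ∞) : WithTop ℕ∞) + 1) g := by simpa using hg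
  exact ((contDiff_succ_iff_deriv).1 h).2.2

lemma smooth_hasDerivAt {g : ℝ → ℝ} (hg : ContDiff ℝ (⊤ : ℕ∞) g) (x : ℝ) :
    HasDerivAt g (deriv g x) x :=
  (hg.differentiable (by simp) x).hasDerivAt

lemma keyA (a : ℝ) {g : ℝ → ℝ} (hg : ContDiff ℝ (⊤ : ℕ∞) g)
    (h : ∀ x ∈ Ioo (0:ℝ) 1, 0 ≤ a * (1 / (x * (1 - x))) + deriv (deriv g) x)
    {α x : ℝ} (hα : α ∈ Icc (0:ℝ) 1) (hx : x ∈ Ioo (0:ℝ) 1) :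
    0 ≤ a * FP α x + Pf g α x := by
  have hd : ∀ y ∈ Ioo (0:ℝ) 1, HasDerivAt (fun y => a * GP y + g y)
      (a * (Real.log y - Real.log (1 - y)) + deriv g y) y := fun y hy =>
    ((hasDerivAt_GP hy.1 hy.2).const_mul a).add (smooth_hasDerivAt hg y)
  have hd2 : ∀ y ∈ Ioo (0:ℝ) 1, HasDerivAt
      (fun y => a * (Real.log y - Real.log (1 - y)) + deriv g y)
      (a * (1 / (y * (1 - y))) + deriv (deriv g) y) y := fun y hy =>
    ((hasDerivAt_GP' hy.1 hy.2).const_mul a).add (smooth_hasDerivAt (smooth_deriv hg) y)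
  have hc : ConvexOn ℝ (Icc (0:ℝ) 1) (fun y => a * GP y + g y) := by
    apply convexOn_of_hasDerivWithinAt2_nonneg (convex_Icc 0 1)
      ((continuous_const.mul continuous_GP).add hg.continuous).continuousOn
      (f' := fun y => a * (Real.log y - Real.log (1 - y)) + deriv g y)
      (f'' := fun y => a * (1 / (y * (1 - y))) + deriv (deriv g) y)
    · intro y hy; rw [interior_Icc] at hy; exact (hd y hy).hasDerivWithinAt
    · intro y hy; rw [interior_Icc] at hy; exact (hd2 y hy).hasDerivWithinAt
    · intro y hy; rw [interior_Icc] at hy; exact h y hy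
  have hx' : x ∈ Icc (0:ℝ) 1 := Ioo_subset_Icc_self hx
  have key : (a * (Real.log x - Real.log (1 - x)) + deriv g x) * (α - x)
      ≤ (a * GP α + g α) - (a * GP x + g x) := by
    rcases lt_trichotomy x α with hlt | heq | hgt
    · have := hc.le_slope_of_hasDerivAt hx' hα hlt (hd x hx)
      rw [slope_def_field, le_div_iff₀ (by linarith)] at this
      exact this
    · subst heq; simp
    · have := hc.slope_le_of_hasDerivAt hα hx' hgt (hd x hx)
      rw [slope_def_field, div_le_iff₀ (by linarith)] at this
      linarith
  have e : a * FP α x + Pf g α x = (a * GP α + g α) - (a * GP x + g x) -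
      (a * (Real.log x - Real.log (1 - x)) + deriv g x) * (α - x) := by
    simp only [FP, Pf]
    have : GP x = x * Real.log x + (1 - x) * Real.log (1 - x) := rfl
    rw [this]; ring
  rw [e]; linarith

lemma FP_nonneg {α x : ℝ} (hα : α ∈ Icc (0:ℝ) 1) (hx : x ∈ Ioo (0:ℝ) 1) : 0 ≤ FP α x := by
  have := keyA 1 (g := fun _ => 0) contDiff_const (by
    intro y hy
    have : 0 < y * (1 - y) := mul_pos hy.1 (by linarith [hy.2])
    have h2 : 0 ≤ 1 / (y * (1 - y)) := by positivity
    simpa only [deriv_const', one_mul, add_zero, deriv_const] using h2) hα hx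
  simpa [Pf] using this

lemma Pf_bound {g : ℝ → ℝ} (hg : ContDiff ℝ (⊤ : ℕ∞) g) {M : ℝ}
    (hM : ∀ x ∈ Icc (0:ℝ) 1, |deriv (deriv g) x| ≤ M)
    {α x : ℝ} (hα : α ∈ Icc (0:ℝ) 1) (hx : x ∈ Ioo (0:ℝ) 1) :
    |Pf g α x| ≤ M / 2 * (x - α) ^ 2 := by
  have aux : ∀ s : ℝ, |s| = 1 → 0 ≤ M / 2 * (x - α) ^ 2 + s * Pf g α x := by
    intro s hs
    have hd : ∀ y, HasDerivAt (fun y => M / 2 * y ^ 2 + s * g y) (M * y + s * deriv g y) y := by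
      intro y
      have := ((hasDerivAt_pow 2 y).const_mul (M / 2)).add ((smooth_hasDerivAt hg y).const_mul s)
      refine this.congr_deriv ?_
      norm_num; ring
    have hd1 : deriv (fun y => M / 2 * y ^ 2 + s * g y) = fun y => M * y + s * deriv g y :=
      funext fun y => (hd y).deriv
    have hd2 : ∀ y, deriv (fun y => M * y + s * deriv g y) y = M + s * deriv (deriv g) y := by
      intro y
      have := ((hasDerivAt_id y).const_mul M).add
        ((smooth_hasDerivAt (smooth_deriv hg) y).const_mul s)
      rw [mul_one] at this
      exact this.deriv
    have := keyA 0 (g := fun y => M / 2 * y ^ 2 + s * g y)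
      ((contDiff_const.mul (contDiff_id.pow 2)).add (contDiff_const.mul hg)) (by
        intro y hy
        rw [hd1, hd2]
        have h1 := hM y (Ioo_subset_Icc_self hy)
        have h2 : |s * deriv (deriv g) y| ≤ M := by rw [abs_mul, hs, one_mul]; exact h1
        have := (abs_le.1 h2).1
        linarith) hα hx
    simp only [Pf, hd1] at this ⊢
    nlinarith [this]
  have h1 := aux 1 (by simp)
  have h2 := aux (-1) (by simp)
  rw [abs_le]; constructor <;> linarith

lemma FP_scale {α x c : ℝ} (h0 : 0 < α) (h1 : α ≤ 1) (hx : x ∈ Ioo (0:ℝ) 1)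
    (hc0 : 0 < c) (hc1 : c ≤ 1) : FP α (α + c * (x - α)) ≤ c * FP α x := by
  have hlog : ∀ a b : ℝ, 0 < a → 0 < b →
      (1 - c) * Real.log a + c * Real.log b ≤ Real.log ((1 - c) * a + c * b) := by
    intro a b ha hb
    have := strictConcaveOn_log_Ioi.concaveOn.2 (mem_Ioi.2 ha) (mem_Ioi.2 hb)
      (by linarith : 0 ≤ 1 - c) hc0.le (by ring)
    simpa using this
  have e1 := hlog α x h0 hx.1
  have e2 : (1 - α) * ((1 - c) * Real.log (1 - α) + c * Real.log (1 - x)) ≤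
      (1 - α) * Real.log ((1 - c) * (1 - α) + c * (1 - x)) := by
    rcases h1.eq_or_lt with h | h
    · subst h; simp
    · exact mul_le_mul_of_nonneg_left (hlog _ _ (by linarith) (by linarith [hx.2])) (by linarith)
  have e1' := mul_le_mul_of_nonneg_left e1 h0.le
  have r1 : α + c * (x - α) = (1 - c) * α + c * x := by ring
  have r2 : 1 - ((1 - c) * α + c * x) = (1 - c) * (1 - α) + c * (1 - x) := by ring
  simp only [FP, GP]
  rw [r1, r2]
  nlinarith [e1', e2]

lemma W_eq {K α x : ℝ} (hx : x ∈ Ioo (0:ℝ) 1) : W K α x = Real.exp (-K * FP α x) := by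
  have h1 : 0 < 1 - x := by linarith [hx.2]
  rw [W, Real.rpow_def_of_pos hx.1, Real.rpow_def_of_pos h1, ← Real.exp_add, ← Real.exp_add]
  congr 1
  simp only [FP]; ring

lemma W_cont {K α : ℝ} (hK : 0 ≤ K) (h0 : 0 ≤ α) (h1 : α ≤ 1) : Continuous (W K α) := by
  unfold W
  refine continuous_const.mul ((Real.continuous_rpow_const (mul_nonneg hK h0)).mul ?_)
  exact (Real.continuous_rpow_const (mul_nonneg hK (by linarith))).comp
    (continuous_const.sub continuous_id)

lemma W_nonneg {K α x : ℝ} (hx : x ∈ Icc (0:ℝ) 1) : 0 ≤ W K α x := by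
  unfold W
  have := Real.rpow_nonneg hx.1 (K * α)
  have := Real.rpow_nonneg (by linarith [hx.2] : 0 ≤ 1 - x) (K * (1 - α))
  positivity

lemma W_deriv {K α x : ℝ} (hx : x ∈ Ioo (0:ℝ) 1) :
    HasDerivAt (W K α) (-K * ((x - α) / (x * (1 - x))) * W K α x) x := by
  have h1x : 1 - x ≠ 0 := by linarith [hx.2]
  have h0x : x ≠ 0 := hx.1.ne'
  have hs : HasDerivAt (fun y : ℝ => 1 - y) (-1) x := by
    simpa using (hasDerivAt_id x).const_sub 1
  have hF : HasDerivAt (FP α) ((x - α) / (x * (1 - x))) x := by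
    have := ((((Real.hasDerivAt_log h0x).const_mul α).neg).sub
      ((hs.log h1x).const_mul (1 - α))).add_const (GP α)
    refine this.congr_deriv ?_
    field_simp
    ring
  have h := (hF.const_mul (-K)).exp
  have he : W K α =ᶠ[nhds x] fun y => Real.exp (-K * FP α y) := by
    filter_upwards [Ioo_mem_nhds hx.1 hx.2] with y hy
    exact W_eq hy
  refine (h.congr_of_eventuallyEq he).congr_deriv ?_
  rw [W_eq hx]; ring

lemma moment {K α : ℝ} (hK : 0 < K) (h0 : 0 < α) (h1 : α ≤ 1) :
    K * ∫ x in (0:ℝ)..1, (x - α) ^ 2 * W K α x ≤ (α + 2 / K) * ∫ x in (0:ℝ)..1, W K α x := by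
  have hw := W_cont hK.le h0.le h1
  have A : ∫ x in (0:ℝ)..1, ((1 - 2 * x) * W K α x - K * ((x - α) * W K α x)) = 0 := by
    rw [intervalIntegral.integral_eq_sub_of_hasDerivAt_of_le (f := fun x => x * (1 - x) * W K α x)
      zero_le_one (by fun_prop) _ (Continuous.intervalIntegrable (by fun_prop) _ _)]
    · simp
    · intro x hx
      have h1x : 1 - x ≠ 0 := by linarith [hx.2]
      have h0x : x ≠ 0 := hx.1.ne'
      have hs : HasDerivAt (fun y : ℝ => 1 - y) (-1) x := by
        simpa using (hasDerivAt_id x).const_sub 1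
      have := ((hasDerivAt_id x).mul hs).mul (W_deriv (K := K) (α := α) hx)
      refine this.congr_deriv ?_
      simp only [id, Pi.mul_apply]
      field_simp
      ring
  have B : ∫ x in (0:ℝ)..1, ((x * (1 - x) + (x - α) * (1 - 2 * x)) * W K α x
      - K * ((x - α) ^ 2 * W K α x)) = 0 := by
    rw [intervalIntegral.integral_eq_sub_of_hasDerivAt_of_le
      (f := fun x => (x - α) * (x * (1 - x)) * W K α x)
      zero_le_one (by fun_prop) _ (Continuous.intervalIntegrable (by fun_prop) _ _)]
    · simp
    · intro x hx
      have h1x : 1 - x ≠ 0 := by linarith [hx.2]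
      have h0x : x ≠ 0 := hx.1.ne'
      have hs : HasDerivAt (fun y : ℝ => 1 - y) (-1) x := by
        simpa using (hasDerivAt_id x).const_sub 1
      have := (((hasDerivAt_id x).sub_const α).mul ((hasDerivAt_id x).mul hs)).mul
        (W_deriv (K := K) (α := α) hx)
      refine this.congr_deriv ?_
      simp only [id, Pi.mul_apply]
      field_simp
      ring
  rw [intervalIntegral.integral_sub (Continuous.intervalIntegrable (by fun_prop) _ _)
    (Continuous.intervalIntegrable (by fun_prop) _ _), intervalIntegral.integral_const_mul] at A B
  have A' : ∫ x in (0:ℝ)..1, (1 - 2 * x) * W K α x ≤ ∫ x in (0:ℝ)..1, W K α x := by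
    apply intervalIntegral.integral_mono_on zero_le_one
      (Continuous.intervalIntegrable (by fun_prop) _ _)
      (Continuous.intervalIntegrable (by fun_prop) _ _)
    intro x hx
    nlinarith [W_nonneg (K := K) (α := α) hx, mul_nonneg hx.1 (W_nonneg (K := K) (α := α) hx)]
  have B' : ∫ x in (0:ℝ)..1, (x * (1 - x) + (x - α) * (1 - 2 * x)) * W K α x ≤
      ∫ x in (0:ℝ)..1, (α * W K α x + (2 - 2 * α) * ((x - α) * W K α x)) := by
    apply intervalIntegral.integral_mono_on zero_le_one
      (Continuous.intervalIntegrable (by fun_prop) _ _)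
      (Continuous.intervalIntegrable (by fun_prop) _ _)
    intro x hx
    have hW := W_nonneg (K := K) (α := α) hx
    have : (x * (1 - x) + (x - α) * (1 - 2 * x)) ≤ α + (2 - 2 * α) * (x - α) := by
      nlinarith [sq_nonneg x, sq_nonneg (x - α)]
    calc _ ≤ (α + (2 - 2 * α) * (x - α)) * W K α x := mul_le_mul_of_nonneg_right this hW
      _ = _ := by ring
  rw [intervalIntegral.integral_add (Continuous.intervalIntegrable (by fun_prop) _ _)
    (Continuous.intervalIntegrable (by fun_prop) _ _), intervalIntegral.integral_const_mul,
    intervalIntegral.integral_const_mul] at B'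
  set I := ∫ x in (0:ℝ)..1, W K α x
  set J := ∫ x in (0:ℝ)..1, (x - α) * W K α x
  have hI : 0 ≤ I := intervalIntegral.integral_nonneg zero_le_one fun x hx => W_nonneg hx
  have hJ : J ≤ I / K := by rw [le_div_iff₀ hK]; linarith
  have hIK : 0 ≤ I / K := by positivity
  have e : (α + 2 / K) * I = α * I + 2 * (I / K) := by ring
  rw [e]
  nlinarith [mul_le_mul_of_nonneg_left hJ (by linarith : 0 ≤ 2 - 2 * α), mul_nonneg h0.le hIK]

lemma scale {K α c : ℝ} (hK : 0 < K) (h0 : 0 < α) (h1 : α ≤ 1) (hc0 : 0 < c) (hc1 : c ≤ 1) :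
    ∫ x in (0:ℝ)..1, (x - α) ^ 2 * W (c * K) α x ≤
      (c⁻¹) ^ 3 * ∫ x in (0:ℝ)..1, (x - α) ^ 2 * W K α x := by
  have hw := W_cont hK.le h0.le h1
  have hw' := W_cont (mul_pos hc0 hK).le h0.le h1
  have hcont : Continuous fun x => (x - α) ^ 2 * W K α x := by fun_prop
  have s1 : ∫ x in (0:ℝ)..1, (x - α) ^ 2 * W (c * K) α x ≤
      ∫ x in (0:ℝ)..1, (x - α) ^ 2 * W K α (c * x + (α - c * α)) := by
    apply intervalIntegral.integral_mono_on_of_le_Ioo zero_le_one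
      (Continuous.intervalIntegrable (by fun_prop) _ _)
      (Continuous.intervalIntegrable (by fun_prop) _ _)
    intro x hx
    apply mul_le_mul_of_nonneg_left _ (sq_nonneg _)
    have hy : c * x + (α - c * α) ∈ Ioo (0:ℝ) 1 := by
      have := mul_pos hc0 hx.1
      constructor
      · nlinarith
      · nlinarith [hx.2]
    rw [W_eq hx, W_eq hy]
    apply Real.exp_le_exp.2
    have := FP_scale h0 h1 hx hc0 hc1
    rw [show α + c * (x - α) = c * x + (α - c * α) by ring] at this
    nlinarith
  have s2 : ∫ x in (0:ℝ)..1, (x - α) ^ 2 * W K α (c * x + (α - c * α)) =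
      (c⁻¹) ^ 3 * ∫ x in (α - c * α)..(c + (α - c * α)), (x - α) ^ 2 * W K α x := by
    have := intervalIntegral.integral_comp_mul_add (a := (0:ℝ)) (b := 1)
      (fun x => (x - α) ^ 2 * W K α x) hc0.ne' (α - c * α)
    simp only [mul_zero, zero_add, mul_one, smul_eq_mul] at this
    have e : ∀ x, (x - α) ^ 2 * W K α (c * x + (α - c * α)) =
      (c⁻¹) ^ 2 * ((c * x + (α - c * α) - α) ^ 2 * W K α (c * x + (α - c * α))) := by
      intro x; field_simp; ring
    simp_rw [e]
    rw [intervalIntegral.integral_const_mul, this]; ring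
  rw [s2] at s1
  refine s1.trans (mul_le_mul_of_nonneg_left ?_ (by positivity))
  apply intervalIntegral.integral_mono_interval
  · nlinarith
  · linarith
  · nlinarith
  · filter_upwards [MeasureTheory.ae_restrict_mem measurableSet_Ioc] with x hx
    exact mul_nonneg (sq_nonneg _) (W_nonneg ⟨hx.1.le, hx.2⟩)
  · exact hcont.intervalIntegrable _ _

lemma exp_diff {a b m : ℝ} (ha : m ≤ a) (hb : m ≤ b) :
    |Real.exp (-a) - Real.exp (-b)| ≤ |a - b| * Real.exp (-m) := by
  have aux : ∀ a b : ℝ, m ≤ a → a ≤ b →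
      |Real.exp (-a) - Real.exp (-b)| ≤ |a - b| * Real.exp (-m) := by
    intro a b ha hab
    have h1 : Real.exp (-b) ≤ Real.exp (-a) := Real.exp_le_exp.2 (by linarith)
    have h2 : Real.exp (-a) ≤ Real.exp (-m) := Real.exp_le_exp.2 (by linarith)
    rw [abs_of_nonneg (by linarith), abs_sub_comm, abs_of_nonneg (by linarith : 0 ≤ b - a)]
    have h3 : Real.exp (-b) = Real.exp (-a) * Real.exp (a - b) := by
      rw [← Real.exp_add]; congr 1; ring
    have h4 := Real.add_one_le_exp (a - b)
    have h5 := Real.exp_pos (-a)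
    calc Real.exp (-a) - Real.exp (-b) ≤ (b - a) * Real.exp (-a) := by rw [h3]; nlinarith
      _ ≤ _ := mul_le_mul_of_nonneg_left h2 (by linarith)
  rcases le_total a b with h | h
  · exact aux a b ha h
  · rw [abs_sub_comm, abs_sub_comm a b]; exact aux b a hb h

lemma I_pos {K α : ℝ} (hK : 0 < K) (h0 : 0 < α) (h1 : α ≤ 1) :
    0 < ∫ x in (0:ℝ)..1, W K α x := by
  apply intervalIntegral.intervalIntegral_pos_of_pos_on
    ((W_cont hK.le h0.le h1).intervalIntegrable _ _) _ zero_lt_one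
  intro x hx
  rw [W_eq hx]; exact Real.exp_pos _

/-- The analytic core. -/
lemma core {K α c M : ℝ} (hK : 0 < K) (h0 : 0 < α) (h1 : α ≤ 1) (hc0 : 0 < c) (hc1 : c ≤ 1)
    (hM0 : 0 ≤ M) {p : ℝ → ℝ} (hp : Continuous p)
    (hpb : ∀ x ∈ Ioo (0:ℝ) 1, |p x| ≤ M / 2 * (x - α) ^ 2)
    (hpc : ∀ x ∈ Ioo (0:ℝ) 1, c * FP α x ≤ FP α x + p x) :
    |(∫ x in (0:ℝ)..1, W K α x * Real.exp (-K * p x)) / (∫ x in (0:ℝ)..1, W K α x) - 1| ≤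
      M / 2 * (c⁻¹) ^ 3 * (α + 2 / K) := by
  have hw := W_cont hK.le h0.le h1
  have hw' := W_cont (mul_pos hc0 hK).le h0.le h1
  have hI := I_pos hK h0 h1
  have hdiff : |(∫ x in (0:ℝ)..1, W K α x * Real.exp (-K * p x)) - (∫ x in (0:ℝ)..1, W K α x)| ≤
      K * (M / 2) * ∫ x in (0:ℝ)..1, (x - α) ^ 2 * W (c * K) α x := by
    rw [← intervalIntegral.integral_sub (Continuous.intervalIntegrable (by fun_prop) _ _)
      (Continuous.intervalIntegrable (by fun_prop) _ _), ← intervalIntegral.integral_const_mul]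
    refine (intervalIntegral.abs_integral_le_integral_abs zero_le_one).trans ?_
    apply intervalIntegral.integral_mono_on_of_le_Ioo zero_le_one
      (Continuous.intervalIntegrable (by fun_prop) _ _)
      (Continuous.intervalIntegrable (by fun_prop) _ _)
    intro x hx
    have hF := FP_nonneg ⟨h0.le, h1⟩ hx
    have hpx := hpc x hx
    rw [W_eq hx, W_eq hx, ← Real.exp_add]
    have := exp_diff (m := c * K * FP α x) (a := K * FP α x + K * p x) (b := K * FP α x)
      (by nlinarith) (by nlinarith [mul_nonneg hK.le hF])
    rw [show -K * FP α x + -K * p x = -(K * FP α x + K * p x) by ring,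
      show -K * FP α x = -(K * FP α x) by ring,
      show -(c * K) * FP α x = -(c * K * FP α x) by ring]
    refine this.trans ?_
    rw [show K * FP α x + K * p x - K * FP α x = K * p x by ring, abs_mul, abs_of_pos hK]
    have h2 := mul_le_mul_of_nonneg_left (hpb x hx) hK.le
    have h3 := mul_le_mul_of_nonneg_right h2 (Real.exp_pos (-(c * K * FP α x))).le
    refine h3.trans (le_of_eq (by ring))
  rw [div_sub_one hI.ne', abs_div, abs_of_pos hI, div_le_iff₀ hI]
  refine hdiff.trans ?_
  have h2 := mul_le_mul_of_nonneg_left (scale hK h0 h1 hc0 hc1) (by positivity : 0 ≤ K * (M / 2))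
  have h3 := mul_le_mul_of_nonneg_left (moment hK h0 h1)
    (by positivity : 0 ≤ M / 2 * (c⁻¹) ^ 3)
  linarith

lemma Pf_cont {g : ℝ → ℝ} (hg : ContDiff ℝ (⊤ : ℕ∞) g) (α : ℝ) : Continuous (Pf g α) := by
  have h1 := hg.continuous
  have h2 := (smooth_deriv hg).continuous
  unfold Pf
  fun_prop

lemma Phase_GP {α x : ℝ} (hx : x ∈ Ioo (0:ℝ) 1) : Phase GP α x = FP α x := by
  rw [Phase, (hasDerivAt_GP hx.1 hx.2).deriv, FP]
  have : GP x = x * Real.log x + (1 - x) * Real.log (1 - x) := rfl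
  rw [this]; ring

lemma Phase_Gt {f0 f1 : ℝ → ℝ} (hf0 : ContDiff ℝ (⊤ : ℕ∞) f0) (hf1 : ContDiff ℝ (⊤ : ℕ∞) f1)
    (t : ℝ) {α x : ℝ} (hx : x ∈ Ioo (0:ℝ) 1) :
    Phase (Gt f0 f1 t) α x = FP α x + ((1 - t) * Pf f0 α x + t * Pf f1 α x) := by
  have hd : HasDerivAt (Gt f0 f1 t) _ x := (hasDerivAt_GP hx.1 hx.2).add
    (((smooth_hasDerivAt hf0 x).const_mul (1 - t)).add ((smooth_hasDerivAt hf1 x).const_mul t))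
  rw [Phase, hd.deriv, ← Phase_GP hx, Phase, (hasDerivAt_GP hx.1 hx.2).deriv]
  simp only [Gt, Pf]; ring

lemma second_deriv {f : ℝ → ℝ} (hf : ContDiff ℝ (⊤ : ℕ∞) f) {x : ℝ} (hx : x ∈ Ioo (0:ℝ) 1) :
    iteratedDeriv 2 (fun x => GP x + f x) x = 1 / (x * (1 - x)) + deriv (deriv f) x := by
  rw [iteratedDeriv_succ, iteratedDeriv_one]
  have he : deriv (fun x => GP x + f x) =ᶠ[nhds x]
      fun y => (Real.log y - Real.log (1 - y)) + deriv f y := by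
    filter_upwards [Ioo_mem_nhds hx.1 hx.2] with y hy
    exact ((hasDerivAt_GP hy.1 hy.2).add (smooth_hasDerivAt hf y)).deriv
  rw [he.deriv_eq]
  exact ((hasDerivAt_GP' hx.1 hx.2).add (smooth_hasDerivAt (smooth_deriv hf) x)).deriv

lemma exists_c {f : ℝ → ℝ} (hf : ContDiff ℝ (⊤ : ℕ∞) f)
    (h : ∀ x ∈ Ioo (0:ℝ) 1, 0 < iteratedDeriv 2 (fun x => GP x + f x) x) :
    ∃ c : ℝ, 0 < c ∧ ∀ x ∈ Ioo (0:ℝ) 1, c * (1 / (x * (1 - x))) ≤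
      1 / (x * (1 - x)) + deriv (deriv f) x := by
  have hc : Continuous (fun x => 1 + x * (1 - x) * deriv (deriv f) x) := by
    have := (smooth_deriv (smooth_deriv hf)).continuous
    fun_prop
  obtain ⟨y, hy, hmin⟩ := isCompact_Icc.exists_isMinOn (nonempty_Icc.2 (zero_le_one (α := ℝ)))
    hc.continuousOn
  refine ⟨1 + y * (1 - y) * deriv (deriv f) y, ?_, ?_⟩
  · rcases hy.1.eq_or_lt with h0 | h0
    · rw [← h0]; simp
    rcases hy.2.eq_or_lt with h1 | h1
    · rw [h1]; simp
    have := h y ⟨h0, h1⟩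
    rw [second_deriv hf ⟨h0, h1⟩] at this
    have hp : 0 < y * (1 - y) := mul_pos h0 (by linarith)
    have h2 := mul_pos hp this
    rw [mul_add, mul_one_div_cancel hp.ne'] at h2
    exact h2
  · intro x hx
    have hp : 0 < x * (1 - x) := mul_pos hx.1 (by linarith [hx.2])
    have h2 : 1 + y * (1 - y) * deriv (deriv f) y ≤ 1 + x * (1 - x) * deriv (deriv f) x :=
      hmin (Ioo_subset_Icc_self hx)
    have h3 := mul_le_mul_of_nonneg_right h2 (by positivity : 0 ≤ 1 / (x * (1 - x)))
    refine h3.trans (le_of_eq ?_)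
    have : 1 - x ≠ 0 := by linarith [hx.2]
    have := hx.1.ne'
    field_simp

lemma exists_M {f : ℝ → ℝ} (hf : ContDiff ℝ (⊤ : ℕ∞) f) :
    ∃ M : ℝ, ∀ x ∈ Icc (0:ℝ) 1, |deriv (deriv f) x| ≤ M := by
  have := (smooth_deriv (smooth_deriv hf)).continuous
  obtain ⟨M, hM⟩ := (isCompact_Icc (a := (0:ℝ)) (b := 1)).exists_bound_of_continuousOn
    this.continuousOn
  exact ⟨M, fun x hx => by simpa using hM x hx⟩

lemma lower {f : ℝ → ℝ} (hf : ContDiff ℝ (⊤ : ℕ∞) f) {c : ℝ}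
    (h : ∀ x ∈ Ioo (0:ℝ) 1, c * (1 / (x * (1 - x))) ≤ 1 / (x * (1 - x)) + deriv (deriv f) x)
    {α x : ℝ} (hα : α ∈ Icc (0:ℝ) 1) (hx : x ∈ Ioo (0:ℝ) 1) :
    c * FP α x ≤ FP α x + Pf f α x := by
  have := keyA (1 - c) hf (fun y hy => by linarith [h y hy]) hα hx
  linarith

lemma integral_congr_Ioo01 {f g : ℝ → ℝ} (h : ∀ x ∈ Ioo (0:ℝ) 1, f x = g x) :
    ∫ x in (0:ℝ)..1, f x = ∫ x in (0:ℝ)..1, g x := by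
  rw [intervalIntegral.integral_of_le zero_le_one, intervalIntegral.integral_of_le zero_le_one,
    MeasureTheory.integral_Ioc_eq_integral_Ioo, MeasureTheory.integral_Ioc_eq_integral_Ioo]
  exact MeasureTheory.setIntegral_congr_fun measurableSet_Ioo h

end BergAux

open BergAux

theorem bergman_cp1_boundary_asymptotics_of_q
    (f0 f1 : ℝ → ℝ) (hf0 : ContDiff ℝ (⊤ : ℕ∞) f0) (hf1 : ContDiff ℝ (⊤ : ℕ∞) f1)
    (hG0 : ∀ x ∈ Set.Ioo (0:ℝ) 1, 0 < iteratedDeriv 2 (Gt f0 f1 0) x)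
    (hG1 : ∀ x ∈ Set.Ioo (0:ℝ) 1, 0 < iteratedDeriv 2 (Gt f0 f1 1) x) :
    ∃ C : ℝ, 0 < C ∧
      ∀ N : ℕ, 1 ≤ N → ∀ t ∈ Set.Icc (0:ℝ) 1, ∀ α : ℝ,
        0 < α → α ≤ (N : ℝ) ^ (-(3:ℝ)/4) →
        |Qnorm (Gt f0 f1 t) N α / Qnorm GP N α - 1| ≤ C * (N : ℝ) ^ (-(1:ℝ)/3) := by
  have e0 : Gt f0 f1 0 = fun x => GP x + f0 x := by funext x; simp [Gt]
  have e1 : Gt f0 f1 1 = fun x => GP x + f1 x := by funext x; simp [Gt]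
  rw [e0] at hG0
  rw [e1] at hG1
  obtain ⟨c0, hc0, hc0'⟩ := exists_c hf0 hG0
  obtain ⟨c1, hc1, hc1'⟩ := exists_c hf1 hG1
  obtain ⟨M0, hM0⟩ := exists_M hf0
  obtain ⟨M1, hM1⟩ := exists_M hf1
  obtain ⟨c, hc, hc1le, hcc0, hcc1⟩ : ∃ c : ℝ, 0 < c ∧ c ≤ 1 ∧ c ≤ c0 ∧ c ≤ c1 :=
    ⟨min 1 (min c0 c1), lt_min one_pos (lt_min hc0 hc1), min_le_left _ _,
      (min_le_right _ _).trans (min_le_left _ _), (min_le_right _ _).trans (min_le_right _ _)⟩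
  obtain ⟨M, hM, hMM0, hMM1⟩ : ∃ M : ℝ, 0 < M ∧ M0 ≤ M ∧ M1 ≤ M :=
    ⟨max 1 (max M0 M1), lt_max_of_lt_left one_pos,
      (le_max_left _ _).trans (le_max_right _ _), (le_max_right _ _).trans (le_max_right _ _)⟩
  refine ⟨M / 2 * (c⁻¹) ^ 3 * 3, by positivity, ?_⟩
  intro N hN t ht α h0 hα
  have hN1 : (1:ℝ) ≤ N := by exact_mod_cast hN
  have hN0 : (0:ℝ) < N := by linarith
  have h1 : α ≤ 1 := hα.trans (Real.rpow_le_one_of_one_le_of_nonpos hN1 (by norm_num))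
  have hαI : α ∈ Icc (0:ℝ) 1 := ⟨h0.le, h1⟩
  set p : ℝ → ℝ := fun x => (1 - t) * Pf f0 α x + t * Pf f1 α x with hpdef
  have hp0 := Pf_cont hf0 α
  have hp1 := Pf_cont hf1 α
  have hp : Continuous p := by fun_prop
  have ht0 : 0 ≤ t := ht.1
  have ht1 : 0 ≤ 1 - t := by linarith [ht.2]
  have Q1 : Qnorm (Gt f0 f1 t) N α =
      2 * Real.pi * ∫ x in (0:ℝ)..1, W N α x * Real.exp (-(N:ℝ) * p x) := by
    rw [Qnorm]; congr 1
    apply integral_congr_Ioo01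
    intro x hx
    rw [Phase_Gt hf0 hf1 t hx, W_eq hx, ← Real.exp_add, mul_add]
  have Q2 : Qnorm GP N α = 2 * Real.pi * ∫ x in (0:ℝ)..1, W N α x := by
    rw [Qnorm]; congr 1
    apply integral_congr_Ioo01
    intro x hx
    rw [Phase_GP hx, W_eq hx]
  rw [Q1, Q2, mul_div_mul_left _ _ (by positivity)]
  have hmain := core (K := N) hN0 h0 h1 hc hc1le hM.le hp (by
    intro x hx
    have a0 := Pf_bound hf0 (fun y hy => (hM0 y hy).trans hMM0) hαI hx
    have a1 := Pf_bound hf1 (fun y hy => (hM1 y hy).trans hMM1) hαI hx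
    calc |p x| ≤ |(1 - t) * Pf f0 α x| + |t * Pf f1 α x| := abs_add_le _ _
      _ = (1 - t) * |Pf f0 α x| + t * |Pf f1 α x| := by
          rw [abs_mul, abs_mul, abs_of_nonneg ht0, abs_of_nonneg ht1]
      _ ≤ (1 - t) * (M / 2 * (x - α) ^ 2) + t * (M / 2 * (x - α) ^ 2) :=
          add_le_add (mul_le_mul_of_nonneg_left a0 ht1) (mul_le_mul_of_nonneg_left a1 ht0)
      _ = _ := by ring) (by
    intro x hx
    have hF := FP_nonneg hαI hx
    have b0 := (mul_le_mul_of_nonneg_right hcc0 hF).trans (lower hf0 hc0' hαI hx)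
    have b1 := (mul_le_mul_of_nonneg_right hcc1 hF).trans (lower hf1 hc1' hαI hx)
    have := add_le_add (mul_le_mul_of_nonneg_left b0 ht1) (mul_le_mul_of_nonneg_left b1 ht0)
    simp only [hpdef]
    linarith)
  refine hmain.trans ?_
  rw [mul_assoc _ 3]
  apply mul_le_mul_of_nonneg_left _ (by positivity)
  have r1 : α ≤ (N:ℝ) ^ (-(1:ℝ)/3) :=
    hα.trans (Real.rpow_le_rpow_of_exponent_le hN1 (by norm_num))
  have r2 : 1 / (N:ℝ) ≤ (N:ℝ) ^ (-(1:ℝ)/3) := by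
    rw [one_div, ← Real.rpow_neg_one]
    exact Real.rpow_le_rpow_of_exponent_le hN1 (by norm_num)
  have r3 : 2 / (N:ℝ) = 2 * (1 / N) := by ring
  rw [r3]; linarith
end

section
/- One has q_t^N(0) → 1 as N → ∞, uniformly in t ∈ [0,1]; explicitly, Q_P^N(0) = 2π·∫_0^1 (1−x)^N dx = 2π/(N+1), Q_t^N(0) = 2π·∫_0^1 e^{−N·(x·G_t'(x) − G_t(x) + f_t(0))} dx, and sup_{t∈[0,1]} |Q_t^N(0)/Q_P^N(0) − 1| → 0 as N → ∞. -/
open Set Filter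

noncomputable def hh (f : ℝ → ℝ) (x : ℝ) : ℝ := x * deriv f x - f x + f 0

lemma GP_hasDeriv {x : ℝ} (hx : x ∈ Set.Ioo (0:ℝ) 1) :
    HasDerivAt GP (Real.log x - Real.log (1 - x)) x := by
  have h0 : x ≠ 0 := hx.1.ne'
  have h1 : 1 - x ≠ 0 := by linarith [hx.2]
  have e1 := (hasDerivAt_id x).mul (Real.hasDerivAt_log h0)
  have e3 : HasDerivAt (fun y : ℝ => 1 - y) (-1) x := by
    simpa using (hasDerivAt_id x).const_sub 1
  have e2 := e3.mul (e3.log h1)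
  have : HasDerivAt GP _ x := e1.add e2
  refine (this.congr_deriv ?_)
  simp only [id]
  field_simp
  ring

lemma G_hasDeriv {f : ℝ → ℝ} (hf : ContDiff ℝ (⊤ : ℕ∞) f) {x : ℝ} (hx : x ∈ Set.Ioo (0:ℝ) 1) :
    HasDerivAt (fun y => GP y + f y) (Real.log x - Real.log (1 - x) + deriv f x) x :=
  (GP_hasDeriv hx).add ((hf.differentiable (by simp)) x).hasDerivAt

lemma smooth_deriv {f : ℝ → ℝ} (hf : ContDiff ℝ (⊤ : ℕ∞) f) : ContDiff ℝ (⊤ : ℕ∞) (deriv f) :=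
  (contDiff_infty_iff_deriv.1 hf).2

lemma G_iter {f : ℝ → ℝ} (hf : ContDiff ℝ (⊤ : ℕ∞) f) {x : ℝ} (hx : x ∈ Set.Ioo (0:ℝ) 1) :
    iteratedDeriv 2 (fun y => GP y + f y) x = x⁻¹ + (1 - x)⁻¹ + deriv (deriv f) x := by
  rw [iteratedDeriv_succ, iteratedDeriv_one]
  have : deriv (fun y => GP y + f y) =ᶠ[nhds x]
      fun y => Real.log y - Real.log (1 - y) + deriv f y := by
    filter_upwards [isOpen_Ioo.mem_nhds hx] with y hy using (G_hasDeriv hf hy).deriv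
  rw [this.deriv_eq]
  have h0 : x ≠ 0 := hx.1.ne'
  have h1 : 1 - x ≠ 0 := by linarith [hx.2]
  have e3 : HasDerivAt (fun y : ℝ => 1 - y) (-1) x := by
    simpa using (hasDerivAt_id x).const_sub 1
  have := ((Real.hasDerivAt_log h0).sub (e3.log h1)).add
    (((smooth_deriv hf).differentiable (by simp)) x).hasDerivAt
  refine (HasDerivAt.deriv this).trans ?_
  ring

lemma hh_hasDeriv {f : ℝ → ℝ} (hf : ContDiff ℝ (⊤ : ℕ∞) f) (x : ℝ) :
    HasDerivAt (hh f) (x * deriv (deriv f) x) x := by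
  have e1 := ((hf.differentiable (by simp)) x).hasDerivAt
  have e2 := (((smooth_deriv hf).differentiable (by simp)) x).hasDerivAt
  have := (((hasDerivAt_id x).mul e2).sub e1).add_const (f 0)
  refine this.congr_deriv ?_
  simp

lemma hh_zero (f : ℝ → ℝ) : hh f 0 = 0 := by simp [hh]

lemma phase_eq {f : ℝ → ℝ} (hf : ContDiff ℝ (⊤ : ℕ∞) f) {x : ℝ} (hx : x ∈ Set.Ioo (0:ℝ) 1) :
    Phase (fun y => GP y + f y) 0 x = - Real.log (1 - x) + hh f x := by
  unfold Phase
  rw [(G_hasDeriv hf hx).deriv]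
  simp [GP, hh]
  ring

lemma exp_phase_eq {f : ℝ → ℝ} (hf : ContDiff ℝ (⊤ : ℕ∞) f) (N : ℕ) {x : ℝ}
    (hx : x ∈ Set.Ioo (0:ℝ) 1) :
    Real.exp (-(N:ℝ) * Phase (fun y => GP y + f y) 0 x)
      = (1 - x) ^ N * Real.exp (-(N:ℝ) * hh f x) := by
  rw [phase_eq hf hx]
  have : (1 - x) ^ N = Real.exp (N * Real.log (1 - x)) := by
    rw [Real.exp_nat_mul, Real.exp_log (by linarith [hx.2])]
  rw [this, ← Real.exp_add]
  ring_nf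

lemma Qnorm_eq {f : ℝ → ℝ} (hf : ContDiff ℝ (⊤ : ℕ∞) f) (N : ℕ) :
    Qnorm (fun y => GP y + f y) N 0
      = 2 * Real.pi * ∫ x in (0:ℝ)..1, (1 - x) ^ N * Real.exp (-(N:ℝ) * hh f x) := by
  unfold Qnorm
  congr 1
  rw [intervalIntegral.integral_of_le zero_le_one, intervalIntegral.integral_of_le zero_le_one,
    MeasureTheory.integral_Ioc_eq_integral_Ioo, MeasureTheory.integral_Ioc_eq_integral_Ioo]
  exact MeasureTheory.setIntegral_congr_fun measurableSet_Ioo (fun x hx => exp_phase_eq hf N hx)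

lemma QP_eq (N : ℕ) : Qnorm GP N 0 = 2 * Real.pi * ∫ x in (0:ℝ)..1, (1 - x) ^ N := by
  have := Qnorm_eq (f := fun _ => 0) contDiff_const N
  simpa [hh] using this

lemma int_pow (N : ℕ) : ∫ x in (0:ℝ)..1, (1 - x) ^ N = 1 / ((N:ℝ) + 1) := by
  rw [intervalIntegral.integral_comp_sub_left (fun x : ℝ => x ^ N) 1]
  simp [integral_pow]

lemma lower {f : ℝ → ℝ} (hf : ContDiff ℝ (⊤ : ℕ∞) f)
    (hG : ∀ x ∈ Set.Ioo (0:ℝ) 1, 0 < iteratedDeriv 2 (fun y => GP y + f y) x) :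
    ∃ c : ℝ, 0 < c ∧ ∀ x ∈ Set.Ico (0:ℝ) 1, c * x ≤ - Real.log (1 - x) + hh f x := by
  have hd2 : Continuous (deriv (deriv f)) := (smooth_deriv (smooth_deriv hf)).continuous
  obtain ⟨x0, hx0, hmin⟩ := isCompact_Icc.exists_isMinOn (Set.nonempty_Icc.2 (zero_le_one' ℝ))
    (f := fun x : ℝ => 1 + x * (1 - x) * deriv (deriv f) x)
    (by fun_prop)
  have hpos : ∀ x ∈ Set.Icc (0:ℝ) 1, 0 < 1 + x * (1 - x) * deriv (deriv f) x := by
    intro x hx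
    rcases hx.1.eq_or_lt with h | h
    · simp [← h]
    rcases hx.2.eq_or_lt with h' | h'
    · simp [h']
    have := hG x ⟨h, h'⟩
    rw [G_iter hf ⟨h, h'⟩] at this
    have h1 : 0 < 1 - x := by linarith
    have h2 := mul_pos (mul_pos h h1) this
    have h3 : x * (1 - x) * (x⁻¹ + (1 - x)⁻¹ + deriv (deriv f) x)
        = 1 + x * (1 - x) * deriv (deriv f) x := by
      have hx0 := h.ne'
      have hx1 := h1.ne'
      field_simp
      ring
    rwa [h3] at h2
  refine ⟨_, hpos x0 hx0, ?_⟩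
  set c := 1 + x0 * (1 - x0) * deriv (deriv f) x0
  have hc : 0 < c := hpos x0 hx0
  have hder : ∀ x ∈ Set.Ico (0:ℝ) 1, HasDerivAt (fun y => - Real.log (1 - y) + hh f y - c * y)
      ((1 - x)⁻¹ + x * deriv (deriv f) x - c) x := by
    intro x hx
    have h1 : 1 - x ≠ 0 := by linarith [hx.2]
    have e3 : HasDerivAt (fun y : ℝ => 1 - y) (-1) x := by
      simpa using (hasDerivAt_id x).const_sub 1
    have := (((e3.log h1).neg).add (hh_hasDeriv hf x)).sub ((hasDerivAt_id x).const_mul c)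
    refine this.congr_deriv ?_
    ring
  have hmono : MonotoneOn (fun y => - Real.log (1 - y) + hh f y - c * y) (Set.Ico (0:ℝ) 1) := by
    apply monotoneOn_of_deriv_nonneg (convex_Ico 0 1)
    · exact fun x hx => (hder x hx).continuousAt.continuousWithinAt
    · intro x hx
      exact (hder x (interior_subset hx)).differentiableAt.differentiableWithinAt
    · intro x hx
      have hx := interior_subset hx
      rw [(hder x hx).deriv]
      have h1 : 0 < 1 - x := by linarith [hx.2]
      have hm : c ≤ 1 + x * (1 - x) * deriv (deriv f) x := hmin ⟨hx.1, hx.2.le⟩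
      have h2 : (1 - x)⁻¹ + x * deriv (deriv f) x
          = (1 + x * (1 - x) * deriv (deriv f) x) / (1 - x) := by
        field_simp
      rw [h2]
      have : c ≤ (1 + x * (1 - x) * deriv (deriv f) x) / (1 - x) := by
        rw [le_div_iff₀ h1]
        nlinarith [hx.1]
      linarith
  intro x hx
  have := hmono (Set.left_mem_Ico.2 one_pos) hx hx.1
  simp [hh_zero] at this
  linarith

lemma hh_bound {f : ℝ → ℝ} (hf : ContDiff ℝ (⊤ : ℕ∞) f) :
    ∃ K : ℝ, 0 ≤ K ∧ ∀ x ∈ Set.Icc (0:ℝ) 1, |hh f x| ≤ K * x ^ 2 := by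
  have hd2 : Continuous (deriv (deriv f)) := (smooth_deriv (smooth_deriv hf)).continuous
  obtain ⟨K, hK⟩ := isCompact_Icc.exists_bound_of_continuousOn (s := Set.Icc (0:ℝ) 1)
    hd2.continuousOn
  have hK0 : 0 ≤ K := (norm_nonneg _).trans (hK 0 (by simp))
  refine ⟨K, hK0, ?_⟩
  intro x hx
  have := (convex_Icc 0 x).norm_image_sub_le_of_norm_hasDerivWithin_le (f := hh f)
    (f' := fun y => y * deriv (deriv f) y) (C := K * x)
    (fun y hy => (hh_hasDeriv hf y).hasDerivWithinAt) (fun y hy => by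
      rw [norm_mul, mul_comm]
      have := hK y ⟨hy.1, hy.2.trans hx.2⟩
      have h2 : ‖y‖ ≤ x := by rw [Real.norm_of_nonneg hy.1]; exact hy.2
      gcongr) (Set.left_mem_Icc.2 hx.1) (Set.right_mem_Icc.2 hx.1)
  rw [hh_zero, sub_zero, sub_zero, Real.norm_eq_abs, Real.norm_of_nonneg hx.1] at this
  linarith

lemma exp_diff {a b m n : ℝ} (hn : 0 ≤ n) (ha : m ≤ a) (hb : m ≤ b) :
    |Real.exp (-n * a) - Real.exp (-n * b)| ≤ n * |a - b| * Real.exp (-n * m) := by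
  wlog h : a ≤ b generalizing a b
  · have := this hb ha (le_of_not_ge h)
    rwa [abs_sub_comm, abs_sub_comm b a] at this
  have h1 : Real.exp (-n * b) ≤ Real.exp (-n * a) := Real.exp_le_exp.2 (by nlinarith)
  rw [abs_of_nonneg (by linarith), abs_sub_comm, abs_of_nonneg (by linarith)]
  have h2 : Real.exp (-n * b) = Real.exp (-n * a) * Real.exp (-(n * (b - a))) := by
    rw [← Real.exp_add]; ring_nf
  have h3 := Real.add_one_le_exp (-(n * (b - a)))
  have h4 : Real.exp (-n * a) ≤ Real.exp (-n * m) := Real.exp_le_exp.2 (by nlinarith)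
  have h5 := Real.exp_pos (-n * a)
  have h6 : 0 ≤ n * (b - a) := mul_nonneg hn (by linarith)
  rw [h2]
  nlinarith

lemma gamma_bound {r : ℝ} (hr : 0 < r) :
    ∫ x in (0:ℝ)..1, x ^ 2 * Real.exp (-(r * x)) ≤ 2 / r ^ 3 := by
  have h := Real.integral_rpow_mul_exp_neg_mul_Ioi (a := 3) (r := r) (by norm_num) hr
  have hint : MeasureTheory.IntegrableOn (fun x : ℝ => x ^ ((3:ℝ) - 1) * Real.exp (-(r * x)))
      (Set.Ioi 0) := by
    by_contra hcon
    have h' := MeasureTheory.integral_undef hcon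
    rw [h] at h'
    have : 0 < (1 / r) ^ (3:ℝ) * Real.Gamma 3 :=
      mul_pos (Real.rpow_pos_of_pos (by positivity) _) (Real.Gamma_pos_of_pos (by norm_num))
    linarith
  have hG : Real.Gamma 3 = 2 := by
    rw [show (3:ℝ) = ((2:ℕ):ℝ) + 1 by norm_num, Real.Gamma_nat_eq_factorial 2]
    norm_num [Nat.factorial]
  have e : ∀ x : ℝ, x ^ ((3:ℝ) - 1) = x ^ 2 := fun x => by
    rw [← Real.rpow_natCast]; norm_num
  simp only [e] at h hint
  have e3 : (1 / r) ^ (3:ℝ) = 1 / r ^ 3 := by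
    rw [show (3:ℝ) = ((3:ℕ):ℝ) by norm_num, Real.rpow_natCast, div_pow, one_pow]
  rw [hG, e3] at h
  rw [intervalIntegral.integral_of_le zero_le_one]
  calc _ ≤ ∫ x in Set.Ioi (0:ℝ), x ^ 2 * Real.exp (-(r * x)) := by
        apply MeasureTheory.setIntegral_mono_set hint
        · exact Filter.Eventually.of_forall (fun x => by positivity)
        · exact (Set.Ioc_subset_Ioi_self).eventuallyLE
    _ = 2 / r ^ 3 := by rw [h]; ring

lemma main_bound {f : ℝ → ℝ} (hf : ContDiff ℝ (⊤ : ℕ∞) f) {c K : ℝ} (hc : 0 < c) (hc1 : c ≤ 1)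
    (hlow : ∀ x ∈ Set.Ico (0:ℝ) 1, c * x ≤ - Real.log (1 - x) + hh f x)
    (hK : ∀ x ∈ Set.Icc (0:ℝ) 1, |hh f x| ≤ K * x ^ 2) (hK0 : 0 ≤ K) {N : ℕ} (hN : 1 ≤ N) :
    |Qnorm (fun y => GP y + f y) N 0 / Qnorm GP N 0 - 1| ≤ 4 * K / c ^ 3 / N := by
  have hN1 : (1:ℝ) ≤ N := by exact_mod_cast hN
  have hhc : Continuous (hh f) :=
    continuous_iff_continuousAt.2 fun x => (hh_hasDeriv hf x).continuousAt
  set I := ∫ x in (0:ℝ)..1, (1 - x) ^ N * Real.exp (-(N:ℝ) * hh f x) with hI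
  have e1 : Qnorm (fun y => GP y + f y) N 0 / Qnorm GP N 0 - 1
      = (N + 1) * (I - ∫ x in (0:ℝ)..1, (1 - x) ^ N) := by
    rw [Qnorm_eq hf, QP_eq, int_pow, ← hI]
    have := Real.pi_pos
    have h2 : (N:ℝ) + 1 ≠ 0 := by positivity
    field_simp
  have hb : |I - ∫ x in (0:ℝ)..1, (1 - x) ^ N| ≤ N * K * (2 / (c * N) ^ 3) := by
    rw [hI, ← intervalIntegral.integral_sub
      (Continuous.intervalIntegrable (by fun_prop) _ _)
      (Continuous.intervalIntegrable (by fun_prop) _ _)]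
    calc _ ≤ ∫ x in (0:ℝ)..1, N * K * (x ^ 2 * Real.exp (-((c * N) * x))) := by
          rw [← Real.norm_eq_abs]
          apply intervalIntegral.norm_integral_le_of_norm_le zero_le_one
          · have hne : ∀ᵐ x : ℝ, x ≠ 1 := by
              simp [MeasureTheory.ae_iff]
            filter_upwards [hne] with x hx1 hx
            have hlt : x < 1 := lt_of_le_of_ne hx.2 hx1
            have hp : 0 < 1 - x := by linarith
            have hpow : (1 - x) ^ N = Real.exp (-(N:ℝ) * (- Real.log (1 - x))) := by
              rw [neg_mul_neg, Real.exp_nat_mul, Real.exp_log hp]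
            have hpe : (1 - x) ^ N * Real.exp (-(N:ℝ) * hh f x)
                = Real.exp (-(N:ℝ) * (- Real.log (1 - x) + hh f x)) := by
              rw [hpow, ← Real.exp_add]; ring_nf
            have hl := Real.log_le_sub_one_of_pos hp
            have hd := exp_diff (n := (N:ℝ)) (by positivity) (hlow x ⟨hx.1.le, hlt⟩)
              (show c * x ≤ - Real.log (1 - x) by nlinarith [hx.1])
            rw [hpe, hpow, Real.norm_eq_abs]
            refine hd.trans ?_
            have hk := hK x ⟨hx.1.le, hx.2⟩
            rw [add_sub_cancel_left, show -(N:ℝ) * (c * x) = -(c * N * x) by ring,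
              ← mul_assoc, mul_assoc (N:ℝ) K]
            gcongr
          · exact Continuous.intervalIntegrable (by fun_prop) _ _
      _ ≤ _ := by
          rw [intervalIntegral.integral_const_mul]
          have := gamma_bound (r := c * N) (by positivity)
          gcongr
  rw [e1, abs_mul, abs_of_pos (by positivity)]
  calc _ ≤ ((N:ℝ) + 1) * (N * K * (2 / (c * N) ^ 3)) := by gcongr
    _ ≤ (2 * N) * (N * K * (2 / (c * N) ^ 3)) := by gcongr; linarith
    _ = _ := by field_simp; ring

theorem bergman_cp1_q_at_zero_tends_to_one
    (f0 f1 : ℝ → ℝ) (hf0 : ContDiff ℝ (⊤ : ℕ∞) f0) (hf1 : ContDiff ℝ (⊤ : ℕ∞) f1)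
    (hG0 : ∀ x ∈ Set.Ioo (0:ℝ) 1, 0 < iteratedDeriv 2 (Gt f0 f1 0) x)
    (hG1 : ∀ x ∈ Set.Ioo (0:ℝ) 1, 0 < iteratedDeriv 2 (Gt f0 f1 1) x) :
    (∀ N : ℕ, Qnorm GP N 0 = 2 * Real.pi * ∫ x in (0:ℝ)..1, (1 - x) ^ N) ∧
    (∀ N : ℕ, Qnorm GP N 0 = 2 * Real.pi / ((N : ℝ) + 1)) ∧
    (∀ N : ℕ, ∀ t ∈ Set.Icc (0:ℝ) 1,
      Qnorm (Gt f0 f1 t) N 0 = 2 * Real.pi * ∫ x in (0:ℝ)..1,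
        Real.exp (-(N:ℝ) * (x * deriv (Gt f0 f1 t) x - Gt f0 f1 t x +
          ((1 - t) * f0 0 + t * f1 0)))) ∧
    (∀ ε : ℝ, 0 < ε → ∃ N₀ : ℕ, ∀ N : ℕ, N₀ ≤ N → ∀ t ∈ Set.Icc (0:ℝ) 1,
      |Qnorm (Gt f0 f1 t) N 0 / Qnorm GP N 0 - 1| < ε) := by
  refine ⟨QP_eq, fun N => by rw [QP_eq, int_pow]; ring, ?_, ?_⟩
  · intro N t _
    unfold Qnorm
    congr 1
    apply intervalIntegral.integral_congr
    intro x _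
    have h0 : Gt f0 f1 t 0 = (1 - t) * f0 0 + t * f1 0 := by simp [Gt, GP]
    simp only [Phase, h0]
    ring_nf
  · have g0 : Gt f0 f1 0 = fun y => GP y + f0 y := by funext y; simp [Gt]
    have g1 : Gt f0 f1 1 = fun y => GP y + f1 y := by funext y; simp [Gt]
    rw [g0] at hG0
    rw [g1] at hG1
    obtain ⟨c0, hc0, hl0⟩ := lower hf0 hG0
    obtain ⟨c1, hc1, hl1⟩ := lower hf1 hG1
    obtain ⟨K0, hK0, hb0⟩ := hh_bound hf0
    obtain ⟨K1, hK1, hb1⟩ := hh_bound hf1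
    obtain ⟨c, hc, hcc0, hcc1, hc1⟩ : ∃ c : ℝ, 0 < c ∧ c ≤ c0 ∧ c ≤ c1 ∧ c ≤ 1 :=
      ⟨min (min c0 c1) 1, by positivity, (min_le_left _ _).trans (min_le_left _ _),
        (min_le_left _ _).trans (min_le_right _ _), min_le_right _ _⟩
    intro ε hε
    obtain ⟨n, hn⟩ := exists_nat_gt (4 * (K0 + K1) / c ^ 3 / ε)
    refine ⟨n + 1, fun N hN t ht => ?_⟩
    have hNn : (n:ℝ) + 1 ≤ N := by exact_mod_cast hN
    have ht0 : 0 ≤ 1 - t := by linarith [ht.2]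
    have hft : ContDiff ℝ (⊤ : ℕ∞) (fun y => (1 - t) * f0 y + t * f1 y) :=
      (contDiff_const.mul hf0).add (contDiff_const.mul hf1)
    have hht : ∀ x, hh (fun y => (1 - t) * f0 y + t * f1 y) x
        = (1 - t) * hh f0 x + t * hh f1 x := by
      intro x
      have d0 := ((hf0.differentiable (by simp)) x).hasDerivAt
      have d1 := ((hf1.differentiable (by simp)) x).hasDerivAt
      have : deriv (fun y => (1 - t) * f0 y + t * f1 y) x
        = (1 - t) * deriv f0 x + t * deriv f1 x :=
        ((d0.const_mul (1 - t)).add (d1.const_mul t)).deriv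
      simp only [hh, this]
      ring
    have hmain := main_bound hft hc hc1 (K := K0 + K1) (N := N) (by
        intro x hx
        rw [hht]
        have a0 := mul_le_mul_of_nonneg_left
          ((mul_le_mul_of_nonneg_right hcc0 hx.1).trans (hl0 x hx)) ht0
        have a1 := mul_le_mul_of_nonneg_left
          ((mul_le_mul_of_nonneg_right hcc1 hx.1).trans (hl1 x hx)) ht.1
        linarith) (by
        intro x hx
        rw [hht]
        have b0 := hb0 x hx
        have b1 := hb1 x hx
        refine (abs_add_le _ _).trans ?_
        rw [abs_mul, abs_mul, abs_of_nonneg ht0, abs_of_nonneg ht.1, add_mul]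
        have a0 : (1 - t) * |hh f0 x| ≤ 1 * |hh f0 x| :=
          mul_le_mul_of_nonneg_right (by linarith [ht.1]) (abs_nonneg _)
        have a1 : t * |hh f1 x| ≤ 1 * |hh f1 x| :=
          mul_le_mul_of_nonneg_right ht.2 (abs_nonneg _)
        linarith) (by positivity) (by omega)
    refine lt_of_le_of_lt hmain ?_
    have hNp : (0:ℝ) < N := by linarith [(Nat.cast_nonneg n : (0:ℝ) ≤ n)]
    rw [div_lt_iff₀ hε] at hn
    rw [div_lt_iff₀ hNp]
    nlinarith
end

section
/- There exists a constant C > 0 such that for every integer N ≥ 1, every t ∈ [0,1], and every α ∈ [0,1]: 1/C ≤ q_t^N(α) ≤ C. -/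
open Set Filter

open MeasureTheory

theorem hasDerivAt_GP {x : ℝ} (hx : x ∈ Ioo (0:ℝ) 1) :
    HasDerivAt GP (Real.log x - Real.log (1 - x)) x := by
  have h0 : x ≠ 0 := hx.1.ne'
  have h1 : (1 - x) ≠ 0 := by linarith [hx.2]
  have e : HasDerivAt (fun y : ℝ => 1 - y) (-1) x := by
    simpa using (hasDerivAt_id x).const_sub 1
  have := ((hasDerivAt_id x).mul (Real.hasDerivAt_log h0)).add (e.mul (e.log h1))
  refine HasDerivAt.congr_deriv this ?_
  simp only [id]
  field_simp
  ring

theorem hasDerivAt_GP2 {x : ℝ} (hx : x ∈ Ioo (0:ℝ) 1) :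
    HasDerivAt (fun y => Real.log y - Real.log (1 - y)) (1 / (x * (1 - x))) x := by
  have h0 : x ≠ 0 := hx.1.ne'
  have h1 : (1 - x) ≠ 0 := by linarith [hx.2]
  have e : HasDerivAt (fun y : ℝ => 1 - y) (-1) x := by
    simpa using (hasDerivAt_id x).const_sub 1
  refine HasDerivAt.congr_deriv ((Real.hasDerivAt_log h0).sub (e.log h1)) ?_
  field_simp
  ring

theorem continuous_GP : Continuous GP := by
  unfold GP
  have h := Real.continuous_mul_log
  exact h.add (h.comp (continuous_const.sub continuous_id))

theorem smooth_facts {f : ℝ → ℝ} (hf : ContDiff ℝ (⊤ : ℕ∞) f) :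
    (∀ x, HasDerivAt f (deriv f x) x) ∧ (∀ x, HasDerivAt (deriv f) (deriv (deriv f) x) x) ∧
      Continuous (deriv (deriv f)) := by
  have h1 : ContDiff ℝ (⊤ : ℕ∞) (deriv f) := (contDiff_infty_iff_deriv.1 hf).2
  have h2 : ContDiff ℝ (⊤ : ℕ∞) (deriv (deriv f)) := (contDiff_infty_iff_deriv.1 h1).2
  exact ⟨fun x => ((contDiff_infty_iff_deriv.1 hf).1 x).hasDerivAt,
    fun x => ((contDiff_infty_iff_deriv.1 h1).1 x).hasDerivAt, h2.continuous⟩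

/-- Tangent line inequality. -/
theorem phase_nonneg (a : ℝ) {f f' f'' : ℝ → ℝ} (h1 : ∀ x, HasDerivAt f (f' x) x)
    (h2 : ∀ x, HasDerivAt f' (f'' x) x)
    (hp : ∀ x ∈ Ioo (0:ℝ) 1, 0 ≤ a * (1 / (x * (1 - x))) + f'' x)
    {α x : ℝ} (hα : α ∈ Icc (0:ℝ) 1) (hx : x ∈ Ioo (0:ℝ) 1) :
    0 ≤ a * Phase GP α x + Phase f α x := by
  have d1 : ∀ y ∈ Ioo (0:ℝ) 1, HasDerivAt (fun x => a * GP x + f x)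
      (a * (Real.log y - Real.log (1 - y)) + f' y) y := fun y hy =>
    ((hasDerivAt_GP hy).const_mul a).add (h1 y)
  have d2 : ∀ y ∈ Ioo (0:ℝ) 1, HasDerivAt (fun y => a * (Real.log y - Real.log (1 - y)) + f' y)
      (a * (1 / (y * (1 - y))) + f'' y) y := fun y hy =>
    ((hasDerivAt_GP2 hy).const_mul a).add (h2 y)
  have hc : ConvexOn ℝ (Icc (0:ℝ) 1) (fun x => a * GP x + f x) := by
    refine convexOn_of_hasDerivWithinAt2_nonneg (convex_Icc 0 1)
      (f' := fun y => a * (Real.log y - Real.log (1 - y)) + f' y)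
      (f'' := fun y => a * (1 / (y * (1 - y))) + f'' y) ?_ ?_ ?_ ?_
    · have : Continuous f := continuous_iff_continuousAt.2 fun x => (h1 x).continuousAt
      exact ((continuous_const.mul continuous_GP).add this).continuousOn
    · rw [interior_Icc]; exact fun y hy => (d1 y hy).hasDerivWithinAt
    · rw [interior_Icc]; exact fun y hy => (d2 y hy).hasDerivWithinAt
    · rw [interior_Icc]; exact hp
  have hx' : x ∈ Icc (0:ℝ) 1 := Ioo_subset_Icc_self hx
  unfold Phase
  rw [(hasDerivAt_GP hx).deriv, (h1 x).deriv]
  rcases lt_trichotomy α x with h | h | h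
  · have := hc.slope_le_of_hasDerivAt hα hx' h (d1 x hx)
    rw [slope_def_field, div_le_iff₀ (by linarith)] at this
    nlinarith
  · subst h; simp
  · have := hc.le_slope_of_hasDerivAt hx' hα h (d1 x hx)
    rw [slope_def_field, le_div_iff₀ (by linarith)] at this
    nlinarith

theorem phase_GP_eq {α x : ℝ} (hx : x ∈ Ioo (0:ℝ) 1) :
    Phase GP α x = GP α - α * Real.log x - (1 - α) * Real.log (1 - x) := by
  unfold Phase
  rw [(hasDerivAt_GP hx).deriv]
  simp only [GP]
  ring

theorem phase_GP_nonneg {α x : ℝ} (hα : α ∈ Icc (0:ℝ) 1) (hx : x ∈ Ioo (0:ℝ) 1) :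
    0 ≤ Phase GP α x := by
  have := phase_nonneg 1 (f := fun _ => 0) (f' := fun _ => 0) (f'' := fun _ => 0)
    (fun x => hasDerivAt_const x 0) (fun x => hasDerivAt_const x 0)
    (fun y hy => by
      have := mul_pos hy.1 (sub_pos.2 hy.2)
      positivity) hα hx
  simpa [Phase] using this

theorem log_aux {a x s : ℝ} (ha : 0 ≤ a) (hx : 0 < x) (hs : s ∈ Ioc (0:ℝ) 1) :
    a * ((1 - s) * Real.log a + s * Real.log x) ≤ a * Real.log (s * x + (1 - s) * a) := by
  rcases ha.eq_or_lt with h | h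
  · simp [← h]
  · have := strictConcaveOn_log_Ioi.concaveOn.2 (mem_Ioi.2 h) (mem_Ioi.2 hx)
      (sub_nonneg.2 hs.2) hs.1.le (by ring)
    simp only [smul_eq_mul] at this
    rw [add_comm (s * x)]
    exact mul_le_mul_of_nonneg_left this ha

theorem comb_mem {α x s : ℝ} (hα : α ∈ Icc (0:ℝ) 1) (hx : x ∈ Ioo (0:ℝ) 1)
    (hs : s ∈ Ioc (0:ℝ) 1) : s * x + (1 - s) * α ∈ Ioo (0:ℝ) 1 := by
  have h1 := mul_pos hs.1 hx.1
  have h2 := mul_nonneg (sub_nonneg.2 hs.2) hα.1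
  have h3 := mul_pos hs.1 (sub_pos.2 hx.2)
  have h4 := mul_nonneg (sub_nonneg.2 hs.2) (sub_nonneg.2 hα.2)
  constructor <;> nlinarith

theorem phase_GP_contract {α x s : ℝ} (hα : α ∈ Icc (0:ℝ) 1) (hx : x ∈ Ioo (0:ℝ) 1)
    (hs : s ∈ Ioc (0:ℝ) 1) : Phase GP α (s * x + (1 - s) * α) ≤ s * Phase GP α x := by
  rw [phase_GP_eq hx, phase_GP_eq (comb_mem hα hx hs)]
  have h1 := log_aux hα.1 hx.1 hs
  have h2 := log_aux (sub_nonneg.2 hα.2) (sub_pos.2 hx.2) hs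
  rw [show s * (1 - x) + (1 - s) * (1 - α) = 1 - (s * x + (1 - s) * α) by ring] at h2
  unfold GP
  nlinarith

theorem intble {F : ℝ → ℝ} (hF : Measurable F) (M : ℝ) (hM : 0 ≤ M)
    (h : ∀ x ∈ Ioo (0:ℝ) 1, 0 ≤ F x) :
    IntervalIntegrable (fun x => Real.exp (-M * F x)) volume 0 1 := by
  rw [intervalIntegrable_iff_integrableOn_Ioo_of_le zero_le_one]
  refine Measure.integrableOn_of_bounded (M := 1) (by simp) ?_ ?_
  · exact (Real.measurable_exp.comp (hF.const_mul (-M))).aestronglyMeasurable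
  · refine (ae_restrict_iff' measurableSet_Ioo).2 (Eventually.of_forall fun x hx => ?_)
    rw [Real.norm_eq_abs, abs_of_pos (Real.exp_pos _), Real.exp_le_one_iff]
    nlinarith [h x hx, mul_nonneg hM (h x hx)]

theorem measurable_phase {G : ℝ → ℝ} (hG : Measurable G) (α : ℝ) : Measurable (Phase G α) := by
  unfold Phase
  exact ((measurable_id.sub_const α).mul (measurable_deriv G)).sub (hG.sub_const _)

theorem scale_int {α s M : ℝ} (hα : α ∈ Icc (0:ℝ) 1) (hs : s ∈ Ioc (0:ℝ) 1) (hM : 0 ≤ M) :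
    s * ∫ x in (0:ℝ)..1, Real.exp (-(s * M) * Phase GP α x) ≤
      ∫ x in (0:ℝ)..1, Real.exp (-M * Phase GP α x) := by
  have hm := measurable_phase continuous_GP.measurable α
  have i1 := intble hm (s * M) (mul_nonneg hs.1.le hM) fun x hx => phase_GP_nonneg hα hx
  have i2 := intble hm M hM fun x hx => phase_GP_nonneg hα hx
  have i3 : IntervalIntegrable (fun x => Real.exp (-M * Phase GP α (s * x + (1 - s) * α)))
      volume 0 1 :=
    intble (F := fun x => Phase GP α (s * x + (1 - s) * α))
      (hm.comp ((measurable_id.const_mul s).add_const _)) M hM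
      fun x hx => phase_GP_nonneg hα (comb_mem hα hx hs)
  have k1 : ∫ x in (0:ℝ)..1, Real.exp (-(s * M) * Phase GP α x) ≤
      ∫ x in (0:ℝ)..1, Real.exp (-M * Phase GP α (s * x + (1 - s) * α)) := by
    refine intervalIntegral.integral_mono_on_of_le_Ioo zero_le_one i1 i3 fun x hx => ?_
    apply Real.exp_le_exp.2
    nlinarith [mul_le_mul_of_nonneg_left (phase_GP_contract hα hx hs) hM]
  refine (mul_le_mul_of_nonneg_left k1 hs.1.le).trans ?_
  rw [intervalIntegral.mul_integral_comp_mul_add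
    (f := fun y => Real.exp (-M * Phase GP α y)) s ((1 - s) * α)]
  have h2 := mul_nonneg (sub_nonneg.2 hs.2) hα.1
  have h4 := mul_nonneg (sub_nonneg.2 hs.2) (sub_nonneg.2 hα.2)
  refine intervalIntegral.integral_mono_interval (by linarith) (by nlinarith [hs.1])
    (by nlinarith) (Eventually.of_forall fun x => (Real.exp_pos _).le) i2

theorem lower_pos {f : ℝ → ℝ} (hf : ContDiff ℝ (⊤ : ℕ∞) f)
    (h : ∀ x ∈ Ioo (0:ℝ) 1, 0 < 1 / (x * (1 - x)) + deriv (deriv f) x) :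
    ∃ c C : ℝ, 0 < c ∧ c ≤ 1 ∧ 1 ≤ C ∧ ∀ x ∈ Ioo (0:ℝ) 1,
      c * (1 / (x * (1 - x))) ≤ 1 / (x * (1 - x)) + deriv (deriv f) x ∧
      1 / (x * (1 - x)) + deriv (deriv f) x ≤ C * (1 / (x * (1 - x))) := by
  set g : ℝ → ℝ := fun x => 1 + x * (1 - x) * deriv (deriv f) x with hg
  have hgc : Continuous g := by
    have := (smooth_facts hf).2.2
    fun_prop
  have ne : (Icc (0:ℝ) 1).Nonempty := ⟨0, by simp⟩
  have key : ∀ x ∈ Ioo (0:ℝ) 1,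
      1 / (x * (1 - x)) + deriv (deriv f) x = g x * (1 / (x * (1 - x))) := by
    intro x hx
    have h0 : x ≠ 0 := hx.1.ne'
    have h1 : (1 - x) ≠ 0 := by linarith [hx.2]
    simp only [hg]
    field_simp
  have pos : ∀ x ∈ Ioo (0:ℝ) 1, 0 < 1 / (x * (1 - x)) := fun x hx =>
    one_div_pos.2 (mul_pos hx.1 (sub_pos.2 hx.2))
  have gpos : ∀ x ∈ Icc (0:ℝ) 1, 0 < g x := by
    intro x hx
    rcases hx.1.eq_or_lt with h0 | h0
    · simp [hg, ← h0]
    rcases hx.2.eq_or_lt with h1 | h1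
    · simp [hg, h1]
    have := h x ⟨h0, h1⟩
    rw [key x ⟨h0, h1⟩] at this
    exact (pos_iff_pos_of_mul_pos this).2 (pos x ⟨h0, h1⟩)
  obtain ⟨u, hu, hu'⟩ := isCompact_Icc.exists_isMinOn ne hgc.continuousOn
  obtain ⟨v, hv, hv'⟩ := isCompact_Icc.exists_isMaxOn ne hgc.continuousOn
  have g0 : g 0 = 1 := by simp [hg]
  refine ⟨g u, g v, gpos u hu, ?_, ?_, fun x hx => ?_⟩
  · rw [← g0]; exact hu' (by simp : (0:ℝ) ∈ Icc (0:ℝ) 1)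
  · rw [← g0]; exact hv' (by simp : (0:ℝ) ∈ Icc (0:ℝ) 1)
  · rw [key x hx]
    have hx' := Ioo_subset_Icc_self hx
    exact ⟨mul_le_mul_of_nonneg_right (hu' hx') (pos x hx).le,
      mul_le_mul_of_nonneg_right (hv' hx') (pos x hx).le⟩

theorem second_deriv {f : ℝ → ℝ} (hf : ContDiff ℝ (⊤ : ℕ∞) f) {x : ℝ} (hx : x ∈ Ioo (0:ℝ) 1) :
    iteratedDeriv 2 (fun x => GP x + f x) x = 1 / (x * (1 - x)) + deriv (deriv f) x := by
  obtain ⟨s1, s2, -⟩ := smooth_facts hf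
  rw [iteratedDeriv_succ, iteratedDeriv_one]
  have : deriv (fun x => GP x + f x) =ᶠ[nhds x]
      fun y => (Real.log y - Real.log (1 - y)) + deriv f y := by
    filter_upwards [isOpen_Ioo.mem_nhds hx] with y hy
    exact ((hasDerivAt_GP hy).add (s1 y)).deriv
  rw [this.deriv_eq]
  exact ((hasDerivAt_GP2 hx).add (s2 x)).deriv

theorem bergman_cp1_uniform_bounds_on_q
    (f0 f1 : ℝ → ℝ) (hf0 : ContDiff ℝ (⊤ : ℕ∞) f0) (hf1 : ContDiff ℝ (⊤ : ℕ∞) f1)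
    (hG0 : ∀ x ∈ Set.Ioo (0:ℝ) 1, 0 < iteratedDeriv 2 (Gt f0 f1 0) x)
    (hG1 : ∀ x ∈ Set.Ioo (0:ℝ) 1, 0 < iteratedDeriv 2 (Gt f0 f1 1) x) :
    ∃ C : ℝ, 0 < C ∧
      ∀ N : ℕ, 1 ≤ N → ∀ t ∈ Set.Icc (0:ℝ) 1, ∀ α ∈ Set.Icc (0:ℝ) 1,
        1 / C ≤ Qnorm (Gt f0 f1 t) N α / Qnorm GP N α ∧
        Qnorm (Gt f0 f1 t) N α / Qnorm GP N α ≤ C := by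
  have e0 : Gt f0 f1 0 = fun x => GP x + f0 x := by ext x; simp [Gt]
  have e1 : Gt f0 f1 1 = fun x => GP x + f1 x := by ext x; simp [Gt]
  obtain ⟨c0, C0, hc0, hc0', hC0, hb0⟩ := lower_pos hf0 fun x hx => by
    rw [← second_deriv hf0 hx, ← e0]; exact hG0 x hx
  obtain ⟨c1, C1, hc1, hc1', hC1, hb1⟩ := lower_pos hf1 fun x hx => by
    rw [← second_deriv hf1 hx, ← e1]; exact hG1 x hx
  obtain ⟨a1, a2, -⟩ := smooth_facts hf0
  obtain ⟨b1, b2, -⟩ := smooth_facts hf1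
  set c := min c0 c1 with hc
  set C := max C0 C1 with hC
  have cpos : 0 < c := lt_min hc0 hc1
  have cle : c ≤ 1 := (min_le_left _ _).trans hc0'
  have Cge : 1 ≤ C := hC0.trans (le_max_left _ _)
  have Cpos : 0 < C := by linarith
  have hD : 0 < max (1 / c) C := lt_max_of_lt_right Cpos
  refine ⟨max (1 / c) C, hD, fun N _ t ht α hα => ?_⟩
  have t1 : 0 ≤ 1 - t := sub_nonneg.2 ht.2
  have hsec : ∀ x ∈ Ioo (0:ℝ) 1,
      c * (1 / (x * (1 - x))) ≤ 1 / (x * (1 - x)) +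
        ((1 - t) * deriv (deriv f0) x + t * deriv (deriv f1) x) ∧
      1 / (x * (1 - x)) + ((1 - t) * deriv (deriv f0) x + t * deriv (deriv f1) x)
        ≤ C * (1 / (x * (1 - x))) := by
    intro x hx
    have pos : 0 ≤ 1 / (x * (1 - x)) := (one_div_pos.2 (mul_pos hx.1 (sub_pos.2 hx.2))).le
    obtain ⟨p1, p2⟩ := hb0 x hx
    obtain ⟨q1, q2⟩ := hb1 x hx
    have m1 := (mul_le_mul_of_nonneg_right (min_le_left c0 c1) pos).trans p1
    have m2 := (mul_le_mul_of_nonneg_right (min_le_right c0 c1) pos).trans q1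
    have m3 := p2.trans (mul_le_mul_of_nonneg_right (le_max_left C0 C1) pos)
    have m4 := q2.trans (mul_le_mul_of_nonneg_right (le_max_right C0 C1) pos)
    rw [← hc] at m1 m2
    rw [← hC] at m3 m4
    generalize 1 / (x * (1 - x)) = r at *
    have n1 := mul_le_mul_of_nonneg_left m1 t1
    have n2 := mul_le_mul_of_nonneg_left m2 ht.1
    have n3 := mul_le_mul_of_nonneg_left m3 t1
    have n4 := mul_le_mul_of_nonneg_left m4 ht.1
    constructor <;> linarith
  have d1 : ∀ x, HasDerivAt (fun x => (1 - t) * f0 x + t * f1 x)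
      ((1 - t) * deriv f0 x + t * deriv f1 x) x := fun x =>
    ((a1 x).const_mul _).add ((b1 x).const_mul _)
  have d2 : ∀ x, HasDerivAt (fun x => (1 - t) * deriv f0 x + t * deriv f1 x)
      ((1 - t) * deriv (deriv f0) x + t * deriv (deriv f1) x) x := fun x =>
    ((a2 x).const_mul _).add ((b2 x).const_mul _)
  have phs : ∀ x ∈ Ioo (0:ℝ) 1, Phase (Gt f0 f1 t) α x =
      Phase GP α x + Phase (fun x => (1 - t) * f0 x + t * f1 x) α x := by
    intro x hx
    have : HasDerivAt (Gt f0 f1 t) _ x := (hasDerivAt_GP hx).add (d1 x)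
    unfold Phase
    rw [this.deriv, (d1 x).deriv, (hasDerivAt_GP hx).deriv]
    simp only [Gt]
    ring
  have lo : ∀ x ∈ Ioo (0:ℝ) 1, c * Phase GP α x ≤ Phase (Gt f0 f1 t) α x := by
    intro x hx
    have := phase_nonneg (1 - c) d1 d2 (fun y hy => by linarith [(hsec y hy).1]) hα hx
    rw [phs x hx]
    linarith
  have hi : ∀ x ∈ Ioo (0:ℝ) 1, Phase (Gt f0 f1 t) α x ≤ C * Phase GP α x := by
    intro x hx
    have := phase_nonneg (C - 1) (fun x => (d1 x).neg) (fun x => (d2 x).neg)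
      (fun y hy => by linarith [(hsec y hy).2]) hα hx
    have e : Phase (-(fun x => (1 - t) * f0 x + t * f1 x)) α x =
        - Phase (fun x => (1 - t) * f0 x + t * f1 x) α x := by
      unfold Phase
      rw [(d1 x).neg.deriv, (d1 x).deriv]
      simp only [Pi.neg_apply]
      ring
    rw [e] at this
    rw [phs x hx]
    linarith
  have hN : (0:ℝ) ≤ N := Nat.cast_nonneg N
  have hm := measurable_phase continuous_GP.measurable α
  have hGm : Measurable (Gt f0 f1 t) := by
    have : Continuous fun x => (1 - t) * f0 x + t * f1 x :=
      continuous_iff_continuousAt.2 fun x => (d1 x).continuousAt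
    exact (continuous_GP.add this).measurable
  have iP : ∀ M : ℝ, 0 ≤ M → _ := fun M hM =>
    intble hm M hM fun x hx => phase_GP_nonneg hα hx
  have iT := intble (measurable_phase hGm α) N hN fun x hx =>
    (mul_nonneg cpos.le (phase_GP_nonneg hα hx)).trans (lo x hx)
  have Ppos : 0 < ∫ x in (0:ℝ)..1, Real.exp (-(N:ℝ) * Phase GP α x) :=
    intervalIntegral.intervalIntegral_pos_of_pos_on (iP N hN)
      (fun x _ => Real.exp_pos _) zero_lt_one
  have up : ∫ x in (0:ℝ)..1, Real.exp (-(N:ℝ) * Phase (Gt f0 f1 t) α x) ≤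
      ∫ x in (0:ℝ)..1, Real.exp (-(c * (N:ℝ)) * Phase GP α x) := by
    refine intervalIntegral.integral_mono_on_of_le_Ioo zero_le_one iT
      (iP _ (mul_nonneg cpos.le hN)) fun x hx => ?_
    apply Real.exp_le_exp.2
    linarith [mul_le_mul_of_nonneg_left (lo x hx) hN]
  have dn : ∫ x in (0:ℝ)..1, Real.exp (-(C * (N:ℝ)) * Phase GP α x) ≤
      ∫ x in (0:ℝ)..1, Real.exp (-(N:ℝ) * Phase (Gt f0 f1 t) α x) := by
    refine intervalIntegral.integral_mono_on_of_le_Ioo zero_le_one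
      (iP _ (mul_nonneg Cpos.le hN)) iT fun x hx => ?_
    apply Real.exp_le_exp.2
    linarith [mul_le_mul_of_nonneg_left (hi x hx) hN]
  have s1 := scale_int hα ⟨cpos, cle⟩ hN
  have s2 := scale_int (M := C * N) hα
    ⟨one_div_pos.2 Cpos, (div_le_one Cpos).2 Cge⟩ (mul_nonneg Cpos.le hN)
  rw [show 1 / C * (C * (N:ℝ)) = N by field_simp] at s2
  unfold Qnorm
  rw [mul_div_mul_left _ _ (by positivity), le_div_iff₀ Ppos, div_le_iff₀ Ppos]
  constructor
  · refine le_trans ?_ (s2.trans dn)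
    exact mul_le_mul_of_nonneg_right
      (one_div_le_one_div_of_le Cpos (le_max_right _ _)) Ppos.le
  · refine up.trans (le_trans ?_ (mul_le_mul_of_nonneg_right (le_max_left (1 / c) C) Ppos.le))
    rw [one_div, ← div_eq_inv_mul, le_div_iff₀ cpos]
    linarith
end
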